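/- arXiv:1507.03755 — 4 statements merged into one kernel-verified Lean document; each statement's English description precedes it below -/
import Mathlib

section
/- Let X and Y be real Banach spaces, let N : X → Y be any map, let L : X → Y be a continuous linear map, let J : Y → X be a map satisfying L(J(y)) = y for all y ∈ Y, and let c₀ be a nonzero real number. Suppose u : ℕ → X, δ : ℕ → Y and p : ℕ → X are sequences such that L(pₖ) = 0 for every k ≥ 1 and uₖ = χₖ·u_{k−1} + c₀·J(δ_{k−1}) + pₖ for every k ≥ 1. If uₖ → 0 as k → ∞, and S ∈ X is such that the partial sums ∑_{n=0}^{m−1} δₙ converge to N(S) as m → ∞, then N(S) = 0. -/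
/-!
`L` kills `pₖ` and inverts `J`, so applying it to the recursion gives
`L uₖ = χₖ • L uₖ₋₁ + c₀ • δₖ₋₁`. Since `χ₁ = 0` discards `u₀`, this telescopes to
`L uₘ = c₀ • ∑_{n < m} δₙ` for `m ≥ 1`. As `m → ∞`, the left side tends to `L 0 = 0` and the right
side to `c₀ • N S`.
-/

open Filter Topology

/-- χ : the sequence with χₖ = 0 for k ≤ 1 and χₖ = 1 for k > 1. -/
noncomputable def chi (k : ℕ) : ℝ := if k ≤ 1 then 0 else 1

theorem eq_sum_range_of_eq_smul_pred_add {R M : Type*} [Semiring R] [AddCommMonoid M] [Module R M]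
    {χ : ℕ → R} (hχ_one : χ 1 = 0) (hχ : ∀ k, 1 < k → χ k = 1) {v f : ℕ → M}
    (hv : ∀ k, 1 ≤ k → v k = χ k • v (k - 1) + f (k - 1)) {m : ℕ} (hm : 1 ≤ m) :
    v m = ∑ n ∈ Finset.range m, f n := by
  induction m, hm using Nat.le_induction with
  | base => simp [hv 1 le_rfl, hχ_one]
  | succ m hm ih =>
    rw [hv (m + 1) (by lia), hχ (m + 1) (by lia), one_smul, Nat.add_sub_cancel, ih,
      Finset.sum_range_succ]

section LinearMap

variable {R X Y : Type*} [Semiring R] [AddCommMonoid X] [Module R X] [AddCommMonoid Y] [Module R Y]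
  {L : X →ₗ[R] Y} {J : Y → X} {c : R} {χ : ℕ → R} {u p : ℕ → X} {δ : ℕ → Y}

theorem map_eq_smul_map_pred_add (hJ : Function.RightInverse J L)
    (hp : ∀ k, 1 ≤ k → L (p k) = 0)
    (hu : ∀ k, 1 ≤ k → u k = χ k • u (k - 1) + c • J (δ (k - 1)) + p k) {k : ℕ} (hk : 1 ≤ k) :
    L (u k) = χ k • L (u (k - 1)) + c • δ (k - 1) := by
  rw [hu k hk, map_add, map_add, map_smul, map_smul, hJ, hp k hk, add_zero]

theorem map_eq_smul_sum_range (hJ : Function.RightInverse J L)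
    (hχ_one : χ 1 = 0) (hχ : ∀ k, 1 < k → χ k = 1) (hp : ∀ k, 1 ≤ k → L (p k) = 0)
    (hu : ∀ k, 1 ≤ k → u k = χ k • u (k - 1) + c • J (δ (k - 1)) + p k) {m : ℕ} (hm : 1 ≤ m) :
    L (u m) = c • ∑ n ∈ Finset.range m, δ n := by
  rw [Finset.smul_sum]
  exact eq_sum_range_of_eq_smul_pred_add (v := fun k => L (u k)) (f := fun k => c • δ k) hχ_one hχ
    (fun _ => map_eq_smul_map_pred_add hJ hp hu) hm

end LinearMap

theorem mddim_convergence_governing_equation_general {𝕜 X Y : Type*} [DivisionRing 𝕜]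
    [AddCommGroup X] [Module 𝕜 X] [TopologicalSpace X]
    [AddCommGroup Y] [Module 𝕜 Y] [TopologicalSpace Y] [T2Space Y] [ContinuousConstSMul 𝕜 Y]
    (N : X → Y) (L : X →L[𝕜] Y) {J : Y → X} {c₀ : 𝕜} (hc₀ : c₀ ≠ 0)
    (hJ : Function.RightInverse J L) {χ : ℕ → 𝕜} (hχ_one : χ 1 = 0) (hχ : ∀ k, 1 < k → χ k = 1)
    {u p : ℕ → X} {δ : ℕ → Y} (hp : ∀ k, 1 ≤ k → L (p k) = 0)
    (hu : ∀ k, 1 ≤ k → u k = χ k • u (k - 1) + c₀ • J (δ (k - 1)) + p k)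
    (hlim : Tendsto u atTop (𝓝 0)) {S : X}
    (hsum : Tendsto (fun m => ∑ n ∈ Finset.range m, δ n) atTop (𝓝 (N S))) :
    N S = 0 := by
  have hLu_zero : Tendsto (fun m => L (u m)) atTop (𝓝 0) :=
    (L.continuous.tendsto' 0 0 (map_zero L)).comp hlim
  have hLu_sum : (fun m => L (u m)) =ᶠ[atTop] fun m => c₀ • ∑ n ∈ Finset.range m, δ n :=
    (eventually_ge_atTop 1).mono fun _ =>
      map_eq_smul_sum_range (L := L.toLinearMap) hJ hχ_one hχ hp hu
  have hsmul : c₀ • N S = 0 :=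
    (tendsto_nhds_unique_of_eventuallyEq hLu_zero (hsum.const_smul c₀) hLu_sum).symm
  exact (smul_eq_zero_iff_right hc₀).mp hsmul

theorem mddim_convergence_governing_equation
    {X Y : Type*} [NormedAddCommGroup X] [NormedSpace ℝ X] [CompleteSpace X]
    [NormedAddCommGroup Y] [NormedSpace ℝ Y] [CompleteSpace Y]
    (N : X → Y) (L : X →L[ℝ] Y) (J : Y → X) (c₀ : ℝ) (hc₀ : c₀ ≠ 0)
    (hJ : ∀ y : Y, L (J y) = y)
    (u : ℕ → X) (δ : ℕ → Y) (p : ℕ → X)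
    (hp : ∀ k : ℕ, 1 ≤ k → L (p k) = 0)
    (hu : ∀ k : ℕ, 1 ≤ k →
      u k = chi k • u (k - 1) + c₀ • J (δ (k - 1)) + p k)
    (hlim : Tendsto u atTop (𝓝 0))
    (S : X)
    (hsum : Tendsto (fun m => ∑ n ∈ Finset.range m, δ n) atTop (𝓝 (N S))) :
    N S = 0 :=
  mddim_convergence_governing_equation_general N L hc₀ hJ (if_pos le_rfl)
    (fun _ hk => if_neg hk.not_ge) hp hu hlim hsum
end

section
/- Let X be a real normed space, B : X → ℝ a continuous linear map, β a real number, and c a nonzero real number. Suppose u : ℕ → X satisfies B(uₖ − χₖ·u_{k−1}) = c·(B(u_{k−1}) − (1 − χₖ)·β) for every k ≥ 1, and suppose the series ∑_{n=0}^{∞} uₙ has sum S (in the sense of HasSum). Then B(S) = β. -/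
/-!
Write `bₙ = B uₙ`. The boundary conditions for `k = 1, …, n + 1` telescope to
`bₙ₊₁ = c • (∑ i ≤ n, bᵢ - β)`. As `n → ∞` the left side tends to `0`, being the general term of
a convergent series, and the right side to `c • (B S - β)`, by continuity of `B`; since `c ≠ 0`,
`B S = β`.
-/

open Filter Finset Topology

theorem chi_of_le_one {k : ℕ} (hk : k ≤ 1) : chi k = 0 := if_pos hk

theorem chi_of_one_lt {k : ℕ} (hk : 1 < k) : chi k = 1 := if_neg hk.not_ge

theorem succ_eq_smul_sum_range_sub {R M : Type*} [AddCommGroup M] [DistribSMul R M]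
    {c : R} {β : M} {b : ℕ → M} (h_one : b 1 = c • (b 0 - β))
    (h_step : ∀ n, b (n + 2) - b (n + 1) = c • b (n + 1)) (n : ℕ) :
    b (n + 1) = c • (∑ i ∈ range (n + 1), b i - β) := by
  induction n with
  | zero => simpa using h_one
  | succ n ih =>
    calc b (n + 2) = c • b (n + 1) + b (n + 1) := sub_eq_iff_eq_add.1 (h_step n)
      _ = c • b (n + 1) + c • (∑ i ∈ range (n + 1), b i - β) := congrArg (c • b (n + 1) + ·) ih
      _ = c • (∑ i ∈ range (n + 2), b i - β) := by
        rw [← smul_add, sum_range_succ _ (n + 1), add_comm (∑ i ∈ range (n + 1), b i),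
          add_sub_assoc]

section Limit

variable {M : Type*} [AddCommGroup M] [TopologicalSpace M] [IsTopologicalAddGroup M]
  {b : ℕ → M} {s : M}

theorem tendsto_atTop_zero_of_tendsto_sum_range
    (hb : Tendsto (fun n ↦ ∑ i ∈ range n, b i) atTop (𝓝 s)) : Tendsto b atTop (𝓝 0) := by
  simpa only [sum_range_succ_sub_sum, sub_self] using
    ((tendsto_add_atTop_iff_nat 1).2 hb).sub hb

theorem eq_of_tendsto_sum_range_of_succ_eq_smul [T2Space M] {R : Type*} [DistribSMul R M]
    [ContinuousConstSMul R M] {c : R} (hc : IsSMulRegular M c) {β : M}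
    (hb : Tendsto (fun n ↦ ∑ i ∈ range n, b i) atTop (𝓝 s))
    (h_succ : ∀ n, b (n + 1) = c • (∑ i ∈ range (n + 1), b i - β)) : s = β := by
  have h_zero : Tendsto (fun n ↦ b (n + 1)) atTop (𝓝 0) :=
    (tendsto_add_atTop_iff_nat 1).2 (tendsto_atTop_zero_of_tendsto_sum_range hb)
  have h_residual : Tendsto (fun n ↦ b (n + 1)) atTop (𝓝 (c • (s - β))) := by
    simpa only [h_succ] using
      (((tendsto_add_atTop_iff_nat 1).2 hb).sub_const β).const_smul c
  have h_smul : c • (s - β) = 0 := tendsto_nhds_unique h_residual h_zero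
  exact sub_eq_zero.1 (hc.right_eq_zero_of_smul h_smul)

end Limit

theorem mddim_boundary_condition_of_sum_general
    {X Y : Type*} [AddCommGroup X] [Module ℝ X] [TopologicalSpace X]
    [AddCommGroup Y] [Module ℝ Y] [TopologicalSpace Y] [IsTopologicalAddGroup Y]
    [ContinuousConstSMul ℝ Y] [T2Space Y]
    (B : X →L[ℝ] Y) (β : Y) (c : ℝ) (hc : c ≠ 0) (u : ℕ → X)
    (h : ∀ k : ℕ, 1 ≤ k →
      B (u k - chi k • u (k - 1)) = c • (B (u (k - 1)) - (1 - chi k) • β))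
    (S : X) (hS : Tendsto (fun n ↦ ∑ i ∈ range n, u i) atTop (𝓝 S)) :
    B S = β := by
  have h_one : B (u 1) = c • (B (u 0) - β) := by
    simpa [chi_of_le_one le_rfl] using h 1 le_rfl
  have h_step (n : ℕ) : B (u (n + 2)) - B (u (n + 1)) = c • B (u (n + 1)) := by
    simpa [chi_of_one_lt (Nat.one_lt_succ_succ n)] using h (n + 2) (Nat.le_add_left 1 _)
  have h_sum : Tendsto (fun n ↦ ∑ i ∈ range n, B (u i)) atTop (𝓝 (B S)) := by
    simpa only [Function.comp_def, map_sum] using (B.continuous.tendsto S).comp hS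
  exact eq_of_tendsto_sum_range_of_succ_eq_smul (.of_ne_zero hc) h_sum
    (succ_eq_smul_sum_range_sub (b := fun n ↦ B (u n)) h_one h_step)

theorem mddim_boundary_condition_of_sum
    {X : Type*} [NormedAddCommGroup X] [NormedSpace ℝ X]
    (B : X →L[ℝ] ℝ) (β c : ℝ) (hc : c ≠ 0) (u : ℕ → X)
    (h : ∀ k : ℕ, 1 ≤ k →
      B (u k - chi k • u (k - 1)) = c * (B (u (k - 1)) - (1 - chi k) * β))
    (S : X) (hS : HasSum u S) :
    B S = β :=
  mddim_boundary_condition_of_sum_general B β c hc u h S hS.tendsto_sum_nat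
end

section
/- Let φ : ℝ → ℝ be analytic at 0 and let α be a real number. Set uₖ := 𝒟ₖ(φ) and Eₖ := 𝒟ₖ(q ↦ exp(α·φ(q))). Then E₀ = exp(α·φ(0)), and for every integer m ≥ 1, E_m = α·∑_{k=0}^{m−1} (1 − k/m)·u_{m−k}·Eₖ. -/
/-- The m-th homotopy-derivative: 𝒟ₘ(g) = g⁽ᵐ⁾(0) / m!. -/
noncomputable def homotopyDeriv (m : ℕ) (g : ℝ → ℝ) : ℝ :=
  iteratedDeriv m g 0 / m.factorial

/-!
Near `0` the function `E = exp (α φ)` satisfies the linear differential equation `E' = E * (α φ)'`.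
Differentiation multiplies and shifts Maclaurin coefficients and the Leibniz rule turns products
into Cauchy products, so comparing coefficients of degree `m - 1` gives
`m * Eₘ = ∑ k < m, Eₖ * (m - k) * α * uₘ₋ₖ`.
-/

open Filter Topology

theorem homotopyDeriv_zero (g : ℝ → ℝ) : homotopyDeriv 0 g = g 0 := by
  simp [homotopyDeriv]

theorem homotopyDeriv_congr {f g : ℝ → ℝ} (m : ℕ) (h : f =ᶠ[𝓝 0] g) :
    homotopyDeriv m f = homotopyDeriv m g := by
  rw [homotopyDeriv, h.iteratedDeriv_eq, homotopyDeriv]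

theorem homotopyDeriv_const_mul (m : ℕ) (c : ℝ) (g : ℝ → ℝ) :
    homotopyDeriv m (fun q => c * g q) = c * homotopyDeriv m g := by
  rw [homotopyDeriv, iteratedDeriv_const_mul_field, mul_div_assoc, homotopyDeriv]

theorem homotopyDeriv_deriv (m : ℕ) (g : ℝ → ℝ) :
    homotopyDeriv m (deriv g) = (m + 1 : ℕ) * homotopyDeriv (m + 1) g := by
  rw [homotopyDeriv, homotopyDeriv, ← iteratedDeriv_succ', Nat.factorial_succ, Nat.cast_mul]
  field_simp

theorem homotopyDeriv_mul {f g : ℝ → ℝ} {m : ℕ} (hf : ContDiffAt ℝ m f 0)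
    (hg : ContDiffAt ℝ m g 0) :
    homotopyDeriv m (f * g) =
      ∑ k ∈ Finset.range (m + 1), homotopyDeriv k f * homotopyDeriv (m - k) g := by
  rw [homotopyDeriv, iteratedDeriv_mul hf hg, Finset.sum_div]
  refine Finset.sum_congr rfl fun k hk => ?_
  have hkm : k ≤ m := Finset.mem_range_succ_iff.mp hk
  rw [Nat.cast_choose ℝ hkm, homotopyDeriv, homotopyDeriv]
  field_simp

theorem eventuallyEq_deriv_exp {ψ : ℝ → ℝ} {x : ℝ} (hψ : ContDiffAt ℝ 1 ψ x) :
    deriv (fun q => Real.exp (ψ q)) =ᶠ[𝓝 x] (fun q => Real.exp (ψ q)) * deriv ψ := by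
  filter_upwards [hψ.eventually (by simp)] with q hq
  exact deriv_exp (hq.differentiableAt one_ne_zero)

theorem succ_mul_homotopyDeriv_succ_exp {ψ : ℝ → ℝ} {n : ℕ}
    (hψ : ContDiffAt ℝ (n + 1 : ℕ) ψ 0) :
    (n + 1 : ℕ) * homotopyDeriv (n + 1) (fun q => Real.exp (ψ q)) =
      ∑ k ∈ Finset.range (n + 1), homotopyDeriv k (fun q => Real.exp (ψ q)) *
        ((n - k + 1 : ℕ) * homotopyDeriv (n - k + 1) ψ) := by
  have hψ_one : ContDiffAt ℝ 1 ψ 0 := hψ.of_le (by exact_mod_cast n.succ_pos)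
  have hψ_deriv : ContDiffAt ℝ n (deriv ψ) 0 := hψ.derivWithin le_rfl
  have hexp : ContDiffAt ℝ n (fun q => Real.exp (ψ q)) 0 :=
    (hψ.of_le (by exact_mod_cast n.le_succ)).exp
  rw [← homotopyDeriv_deriv, homotopyDeriv_congr n (eventuallyEq_deriv_exp hψ_one),
    homotopyDeriv_mul hexp hψ_deriv]
  simp only [homotopyDeriv_deriv]

theorem homotopy_deriv_exp_recursion_general (φ : ℝ → ℝ) (α : ℝ) :
    homotopyDeriv 0 (fun q => Real.exp (α * φ q)) = Real.exp (α * φ 0) ∧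
    ∀ m : ℕ, 1 ≤ m → ContDiffAt ℝ m φ 0 →
      homotopyDeriv m (fun q => Real.exp (α * φ q)) =
        α * ∑ k ∈ Finset.range m,
          (1 - (k : ℝ) / m) * homotopyDeriv (m - k) φ *
            homotopyDeriv k (fun q => Real.exp (α * φ q)) := by
  refine ⟨homotopyDeriv_zero _, fun m hm hφ => ?_⟩
  obtain ⟨n, rfl⟩ := Nat.exists_eq_add_of_le' hm
  have hn : ((n + 1 : ℕ) : ℝ) ≠ 0 := Nat.cast_ne_zero.mpr n.succ_ne_zero
  apply mul_left_cancel₀ hn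
  rw [succ_mul_homotopyDeriv_succ_exp (contDiffAt_const.mul hφ), Finset.mul_sum, Finset.mul_sum]
  refine Finset.sum_congr rfl fun k hk => ?_
  have hkn : k ≤ n := Finset.mem_range_succ_iff.mp hk
  rw [homotopyDeriv_const_mul, ← Nat.sub_add_comm hkn, Nat.cast_sub (hkn.trans n.le_succ)]
  field_simp

theorem homotopy_deriv_exp_recursion
    (φ : ℝ → ℝ) (hφ : AnalyticAt ℝ φ 0) (α : ℝ) :
    homotopyDeriv 0 (fun q => Real.exp (α * φ q)) = Real.exp (α * φ 0) ∧
    ∀ m : ℕ, 1 ≤ m →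
      homotopyDeriv m (fun q => Real.exp (α * φ q)) =
        α * ∑ k ∈ Finset.range m,
          (1 - (k : ℝ) / m) * homotopyDeriv (m - k) φ *
            homotopyDeriv k (fun q => Real.exp (α * φ q)) :=
  (homotopy_deriv_exp_recursion_general φ α).imp_right fun h m hm => h m hm hφ.contDiffAt
end

section
/- Let φ : ℝ → ℝ be analytic at 0 and let f : ℝ → ℝ be analytic at φ(0). Set uₖ := 𝒟ₖ(φ), Fₖ := 𝒟ₖ(q ↦ f(φ(q))) and Gₖ := 𝒟ₖ(q ↦ f′(φ(q))), where f′ denotes the derivative of f. Then F₀ = f(φ(0)), and for every integer m ≥ 1, F_m = ∑_{k=0}^{m−1} (1 − k/m)·u_{m−k}·Gₖ. -/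
/-! Near the base point the chain rule reads `(f ∘ φ)' = φ' • (f' ∘ φ)`. In terms of Taylor
coefficients, differentiation sends `cₙ` to `(n + 1) cₙ₊₁` and products become Cauchy products, so
comparing coefficients of order `n = m - 1` gives `m Fₘ = ∑ (i + 1) uᵢ₊₁ Gₖ` over `i + k = n`.
Dividing by `m`, the weight `(i + 1) / m = (m - k) / m` is `1 - k / m`. -/

section TaylorCoeff

open Finset Filter Topology

variable {𝕜 E : Type*} [NontriviallyNormedField 𝕜] [NormedAddCommGroup E] [NormedSpace 𝕜 E]

/-- The `n`-th Taylor coefficient `g⁽ⁿ⁾(x) / n!` of `g` at `x`. It extends `homotopyDeriv` to any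
base point, base field and normed space of values; the factorial is inverted in `𝕜`, so this is
meaningful only when `n! ≠ 0` there. -/
noncomputable def taylorCoeff (n : ℕ) (g : 𝕜 → E) (x : 𝕜) : E :=
  (n.factorial : 𝕜)⁻¹ • iteratedDeriv n g x

theorem homotopyDeriv_eq_taylorCoeff (m : ℕ) (g : ℝ → ℝ) :
    homotopyDeriv m g = taylorCoeff m g 0 :=
  div_eq_inv_mul _ _

theorem taylorCoeff_zero (g : 𝕜 → E) (x : 𝕜) : taylorCoeff 0 g x = g x := by
  simp [taylorCoeff]

theorem taylorCoeff_congr {g h : 𝕜 → E} {x : 𝕜} (hgh : g =ᶠ[𝓝 x] h) (n : ℕ) :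
    taylorCoeff n g x = taylorCoeff n h x := by
  rw [taylorCoeff, taylorCoeff, hgh.iteratedDeriv_eq n]

theorem taylorCoeff_deriv [CharZero 𝕜] (n : ℕ) (g : 𝕜 → E) (x : 𝕜) :
    taylorCoeff n (deriv g) x = ((n : 𝕜) + 1) • taylorCoeff (n + 1) g x := by
  have hn : (n : 𝕜) + 1 ≠ 0 := n.cast_add_one_ne_zero
  rw [taylorCoeff, taylorCoeff, iteratedDeriv_succ', smul_smul, Nat.factorial_succ, Nat.cast_mul,
    Nat.cast_succ, mul_inv, mul_inv_cancel_left₀ hn]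

section Smul

variable {𝔸 : Type*} [NormedRing 𝔸] [NormedAlgebra 𝕜 𝔸] [Module 𝔸 E] [IsBoundedSMul 𝔸 E]
  [IsScalarTower 𝕜 𝔸 E] {n : ℕ} {f : 𝕜 → 𝔸} {g : 𝕜 → E} {x : 𝕜}

theorem iteratedDeriv_smul_eq_sum_antidiagonal
    (hf : ContDiffAt 𝕜 n f x) (hg : ContDiffAt 𝕜 n g x) :
    iteratedDeriv n (f • g) x =
      ∑ p ∈ antidiagonal n, n.choose p.1 • iteratedDeriv p.1 f x • iteratedDeriv p.2 g x := by
  rw [Nat.sum_antidiagonal_eq_sum_range_succ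
    (fun i j => n.choose i • iteratedDeriv i f x • iteratedDeriv j g x)]
  simpa only [iteratedDerivWithin_univ] using iteratedDerivWithin_smul
    (Set.mem_univ x) uniqueDiffOn_univ hf.contDiffWithinAt hg.contDiffWithinAt

theorem taylorCoeff_smul [CharZero 𝕜] (hf : ContDiffAt 𝕜 n f x) (hg : ContDiffAt 𝕜 n g x) :
    taylorCoeff n (f • g) x =
      ∑ p ∈ antidiagonal n, taylorCoeff p.1 f x • taylorCoeff p.2 g x := by
  rw [taylorCoeff, iteratedDeriv_smul_eq_sum_antidiagonal hf hg, smul_sum]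
  refine sum_congr rfl fun ⟨i, j⟩ hij => ?_
  obtain rfl : i + j = n := mem_antidiagonal.mp hij
  have hfactorial : ((i + j).factorial : 𝕜) ≠ 0 := Nat.cast_ne_zero.mpr (i + j).factorial_ne_zero
  have hchoose : ((i + j).factorial : 𝕜)⁻¹ * (i + j).choose i =
      (i.factorial : 𝕜)⁻¹ * (j.factorial : 𝕜)⁻¹ := by
    rw [Nat.cast_add_choose, ← mul_inv, ← mul_div_assoc, inv_mul_cancel₀ hfactorial, one_div]
  rw [taylorCoeff, taylorCoeff, ← Nat.cast_smul_eq_nsmul 𝕜, smul_smul, hchoose,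
    smul_smul_smul_comm, smul_eq_mul]

end Smul

theorem deriv_comp_eventuallyEq {f : 𝕜 → E} {φ : 𝕜 → 𝕜} {x : 𝕜}
    (hφ : ∀ᶠ y in 𝓝 x, DifferentiableAt 𝕜 φ y)
    (hf : ∀ᶠ z in 𝓝 (φ x), DifferentiableAt 𝕜 f z) :
    deriv (f ∘ φ) =ᶠ[𝓝 x] deriv φ • (deriv f ∘ φ) := by
  filter_upwards [hφ, hφ.self_of_nhds.continuousAt.eventually hf] with y hφy hfy
  exact deriv.scomp y hfy hφy

theorem add_one_smul_taylorCoeff_comp [CharZero 𝕜] {n : ℕ} {f : 𝕜 → E} {φ : 𝕜 → 𝕜} {x : 𝕜}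
    (hφ : ContDiffAt 𝕜 (n + 1) φ x) (hf : ContDiffAt 𝕜 (n + 1) f (φ x)) :
    ((n : 𝕜) + 1) • taylorCoeff (n + 1) (f ∘ φ) x =
      ∑ p ∈ antidiagonal n,
        (((p.1 : 𝕜) + 1) * taylorCoeff (p.1 + 1) φ x) • taylorCoeff p.2 (deriv f ∘ φ) x := by
  have hchain : deriv (f ∘ φ) =ᶠ[𝓝 x] deriv φ • (deriv f ∘ φ) :=
    deriv_comp_eventuallyEq
      ((hφ.eventually (by simp)).mono fun _ h => h.differentiableAt (by simp))
      ((hf.eventually (by simp)).mono fun _ h => h.differentiableAt (by simp))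
  have hφ' : ContDiffAt 𝕜 n (deriv φ) x := hφ.derivWithin le_rfl
  have hf' : ContDiffAt 𝕜 n (deriv f ∘ φ) x :=
    (hf.derivWithin le_rfl).comp x (hφ.of_le le_self_add)
  rw [← taylorCoeff_deriv, taylorCoeff_congr hchain, taylorCoeff_smul hφ' hf']
  simp only [taylorCoeff_deriv, smul_eq_mul]

theorem homotopy_deriv_composition_recursion_general [CharZero 𝕜]
    (φ : 𝕜 → 𝕜) (f : 𝕜 → E) (x : 𝕜) :
    taylorCoeff 0 (f ∘ φ) x = f (φ x) ∧
    ∀ m : ℕ, 1 ≤ m → ContDiffAt 𝕜 m φ x → ContDiffAt 𝕜 m f (φ x) →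
      taylorCoeff m (f ∘ φ) x =
        ∑ k ∈ range m,
          ((1 - (k : 𝕜) / m) * taylorCoeff (m - k) φ x) • taylorCoeff k (deriv f ∘ φ) x := by
  refine ⟨taylorCoeff_zero _ x, fun m hm hφ hf => ?_⟩
  obtain ⟨n, rfl⟩ := Nat.exists_eq_add_of_le' hm
  have hn : (n : 𝕜) + 1 ≠ 0 := n.cast_add_one_ne_zero
  push_cast at hφ hf ⊢
  rw [← inv_smul_smul₀ hn (taylorCoeff (n + 1) (f ∘ φ) x), add_one_smul_taylorCoeff_comp hφ hf,
    ← Nat.sum_antidiagonal_swap, ← Nat.sum_antidiagonal_eq_sum_range_succ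
      (fun k _ => ((1 - (k : 𝕜) / (n + 1)) * taylorCoeff (n + 1 - k) φ x) •
        taylorCoeff k (deriv f ∘ φ) x), smul_sum]
  refine sum_congr rfl fun ⟨k, i⟩ hki => ?_
  obtain rfl : k + i = n := mem_antidiagonal.mp hki
  have hindex : k + i + 1 - k = i + 1 := by omega
  have hweight : 1 - (k : 𝕜) / ((k + i : ℕ) + 1) = ((k + i : ℕ) + 1 : 𝕜)⁻¹ * (i + 1) := by
    rw [one_sub_div hn]
    push_cast
    ring
  rw [hindex, hweight, smul_smul, mul_assoc]
  rfl

end TaylorCoeff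

theorem homotopy_deriv_composition_recursion
    (φ : ℝ → ℝ) (hφ : AnalyticAt ℝ φ 0)
    (f : ℝ → ℝ) (hf : AnalyticAt ℝ f (φ 0)) :
    homotopyDeriv 0 (fun q => f (φ q)) = f (φ 0) ∧
    ∀ m : ℕ, 1 ≤ m →
      homotopyDeriv m (fun q => f (φ q)) =
        ∑ k ∈ Finset.range m,
          (1 - (k : ℝ) / m) * homotopyDeriv (m - k) φ *
            homotopyDeriv k (fun q => deriv f (φ q)) := by
  simp only [homotopyDeriv_eq_taylorCoeff]
  obtain ⟨hzero, hrec⟩ := homotopy_deriv_composition_recursion_general φ f 0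
  exact ⟨hzero, fun m hm => hrec m hm hφ.contDiffAt hf.contDiffAt⟩
end
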